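/- Let X = X₁+X₂ with independent X₁, X₂ having densities of finite Fisher information, and suppose ∫ |p''(x) log p(x)| dx < ∞ where p is the density of X (with convention 0·log 0 = 0). Then I(X) = −∫ p''(x) log p(x) dx. -/

import Mathlib

open MeasureTheory Real

/-!
Write `p`, `p'`, `p''` for the convolutions. Finite Fisher information makes `p₁'` and `p₂'`
integrable, since `|a| ≤ a ^ 2 / b + b` for `b > 0`; hence `p` and `p'` are absolutely continuous
with integrable derivatives `p'` and `p''`. For `ε > 0` the function `log (p + ε)` is bounded and
`p'` vanishes at `±∞`, so integration by parts over the whole line has no boundary term: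
`∫ p' ^ 2 / (p + ε) = -∫ p'' log (p + ε)`. As `ε → 0` the left side converges by monotone, the
right side by dominated convergence. The zeros of `p` do not contribute: an a.e. derivative of a
function vanishes a.e. on each of its level sets, so `p' = 0` and then `p'' = 0` a.e. on `{p = 0}`.
-/

open Filter Topology Set ContinuousLinearMap
open scoped Convolution

lemma countable_setOf_eq_and_deriv_ne_zero {E : Type*} [NormedAddCommGroup E] [NormedSpace ℝ E]
    (f : ℝ → E) (c : E) : {x | f x = c ∧ deriv f x ≠ 0}.Countable := by
  refine (HereditarilyLindelofSpace.isLindelof _).countable_of_isDiscrete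
    (isDiscrete_iff_nhdsNE.2 fun x hx => ?_)
  have hne : ∀ᶠ y in 𝓝[≠] x, f y ≠ c :=
    (differentiableAt_of_deriv_ne_zero hx.2).hasDerivAt.eventually_ne hx.2
  rw [inf_principal_eq_bot]
  filter_upwards [hne] with y hy hyS using hy hyS.1

/-- `f` is absolutely continuous on the whole line with integrable a.e. derivative `f'`. This is the
regularity that finite Fisher information gives to a density. Encoding it by the fundamental theorem
of calculus leaves `f'` free on null sets. -/
structure HasIntegrableDeriv {E : Type*} [NormedAddCommGroup E] [NormedSpace ℝ E]
    (f f' : ℝ → E) : Prop where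
  integrable_deriv : Integrable f'
  sub_eq_integral : ∀ a b : ℝ, f b - f a = ∫ x in a..b, f' x

namespace HasIntegrableDeriv

section NormedSpace

variable {E : Type*} [NormedAddCommGroup E] [NormedSpace ℝ E] {f f' : ℝ → E}

lemma eq_add_integral (hf : HasIntegrableDeriv f f') (a : ℝ) :
    f = fun x => f a + ∫ t in a..x, f' t := by
  ext x
  rw [← hf.sub_eq_integral, add_sub_cancel]

lemma continuous (hf : HasIntegrableDeriv f f') : Continuous f := by
  rw [hf.eq_add_integral 0]
  exact continuous_const.add (intervalIntegral.continuous_primitive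
    (fun _ _ => hf.integrable_deriv.intervalIntegrable) 0)

lemma exists_norm_le (hf : HasIntegrableDeriv f f') : ∃ M, ∀ x, ‖f x‖ ≤ M := by
  refine ⟨‖f 0‖ + ∫ t, ‖f' t‖, fun x => ?_⟩
  rw [hf.eq_add_integral 0]
  simp only [intervalIntegral.integral_same, add_zero]
  refine (norm_add_le _ _).trans (add_le_add_right ?_ _)
  exact intervalIntegral.norm_integral_le_integral_norm_uIoc.trans <|
    setIntegral_le_integral hf.integrable_deriv.norm (ae_of_all _ fun _ => norm_nonneg _)

lemma ae_hasDerivAt [CompleteSpace E] (hf : HasIntegrableDeriv f f') :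
    ∀ᵐ x, HasDerivAt f (f' x) x := by
  filter_upwards [LocallyIntegrable.ae_hasDerivAt_integral hf.integrable_deriv.locallyIntegrable]
    with x hx
  rw [hf.eq_add_integral 0]
  exact (hx 0).const_add _

lemma ae_eq_zero_of_eq [CompleteSpace E] (hf : HasIntegrableDeriv f f') (c : E) :
    ∀ᵐ x, f x = c → f' x = 0 := by
  filter_upwards [hf.ae_hasDerivAt, (countable_setOf_eq_and_deriv_ne_zero f c).ae_notMem volume]
    with x hderiv hx hfx
  rw [← hderiv.deriv]
  exact not_not.1 fun hne => hx ⟨hfx, hne⟩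

lemma hasDerivAt_of_continuousAt [CompleteSpace E] (hf : HasIntegrableDeriv f f')
    {x : ℝ} (hf' : ContinuousAt f' x) : HasDerivAt f (f' x) x := by
  rw [hf.eq_add_integral 0]
  exact (intervalIntegral.integral_hasDerivAt_right hf.integrable_deriv.intervalIntegrable
    hf.integrable_deriv.aestronglyMeasurable.stronglyMeasurableAtFilter hf').const_add _

lemma of_hasDerivAt [CompleteSpace E] (hderiv : ∀ x, HasDerivAt f (f' x) x)
    (hf' : Integrable f') : HasIntegrableDeriv f f' :=
  ⟨hf', fun _ _ => (intervalIntegral.integral_eq_sub_of_hasDerivAt (fun x _ => hderiv x)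
    hf'.intervalIntegrable).symm⟩

lemma add_const (hf : HasIntegrableDeriv f f') (c : E) :
    HasIntegrableDeriv (fun x => f x + c) f' :=
  ⟨hf.integrable_deriv, fun a b => by rw [add_sub_add_right_eq_sub, hf.sub_eq_integral]⟩

lemma tendsto_atTop_zero (hf : HasIntegrableDeriv f f') (hint : Integrable f) :
    Tendsto f atTop (𝓝 0) := by
  have hlim : Tendsto f atTop (𝓝 (f 0 + ∫ t in Ioi (0 : ℝ), f' t)) := by
    refine Tendsto.congr (fun x => (congrFun (hf.eq_add_integral 0) x).symm) ?_
    exact tendsto_const_nhds.add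
      (intervalIntegral_tendsto_integral_Ioi 0 hf.integrable_deriv.integrableOn tendsto_id)
  have hzero := (hint.integrableAtFilter atTop).eq_zero_of_tendsto (fun s hs => ?_) hlim
  · rwa [hzero] at hlim
  · obtain ⟨b, hb⟩ := mem_atTop_sets.1 hs
    exact measure_mono_top hb volume_Ici

lemma comp_neg (hf : HasIntegrableDeriv f f') :
    HasIntegrableDeriv (fun x => f (-x)) (fun x => -f' (-x)) := by
  refine ⟨hf.integrable_deriv.comp_neg.neg, fun a b => ?_⟩
  rw [intervalIntegral.integral_neg, intervalIntegral.integral_comp_neg,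
    ← hf.sub_eq_integral, neg_sub]

lemma tendsto_atBot_zero (hf : HasIntegrableDeriv f f') (hint : Integrable f) :
    Tendsto f atBot (𝓝 0) := by
  simpa [Function.comp_def] using
    (hf.comp_neg.tendsto_atTop_zero hint.comp_neg).comp tendsto_neg_atBot_atTop

lemma integral_deriv_eq_zero (hf : HasIntegrableDeriv f f') (hint : Integrable f) :
    ∫ x, f' x = 0 := by
  have hlim : Tendsto (fun n : ℝ => f n - f (-n)) atTop (𝓝 (∫ x, f' x)) := by
    simp_rw [hf.sub_eq_integral]
    exact intervalIntegral_tendsto_integral hf.integrable_deriv tendsto_neg_atTop_atBot tendsto_id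
  refine tendsto_nhds_unique hlim ?_
  simpa using (hf.tendsto_atTop_zero hint).sub
    ((hf.tendsto_atBot_zero hint).comp tendsto_neg_atTop_atBot)

end NormedSpace

section Convolution

variable {E F G : Type*} [NormedAddCommGroup E] [NormedSpace ℝ E]
  [NormedAddCommGroup F] [NormedSpace ℝ F] [CompleteSpace F]
  [NormedAddCommGroup G] [NormedSpace ℝ G] [CompleteSpace G]

lemma convolution_right (L : E →L[ℝ] F →L[ℝ] G) {g : ℝ → E} {f f' : ℝ → F} (hg : Integrable g)
    (hf : HasIntegrableDeriv f f') : HasIntegrableDeriv (g ⋆[L] f) (g ⋆[L] f') := by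
  obtain ⟨M, hM⟩ := hf.exists_norm_le
  have hexists : ConvolutionExists g f L := fun x =>
    ((hg.norm.const_mul ‖L‖).mul_const M).mono'
      (hg.aestronglyMeasurable.convolution_integrand_snd L hf.continuous.aestronglyMeasurable x)
      (ae_of_all _ fun t => (L.le_opNorm₂ _ _).trans (by gcongr; exact hM _))
  refine ⟨hg.integrable_convolution L hf.integrable_deriv, fun a b => ?_⟩
  have hprod : Integrable (fun q : ℝ × ℝ => L (g q.2) (f' (q.1 - q.2)))
      ((volume.restrict (uIoc a b)).prod volume) :=
    (hg.convolution_integrand L hf.integrable_deriv).mono_measure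
      (Measure.prod_mono Measure.restrict_le_self le_rfl)
  calc (g ⋆[L] f) b - (g ⋆[L] f) a
      = ∫ t, L (g t) (f (b - t) - f (a - t)) := by
        simp_rw [map_sub]
        exact (integral_sub (hexists b) (hexists a)).symm
    _ = ∫ t, ∫ x in a..b, L (g t) (f' (x - t)) := by
        congr with t
        rw [(L (g t)).intervalIntegral_comp_comm
          (hf.integrable_deriv.comp_sub_right t).intervalIntegrable,
          intervalIntegral.integral_comp_sub_right, hf.sub_eq_integral]
    _ = ∫ x in a..b, (g ⋆[L] f') x := (intervalIntegral_integral_swap hprod).symm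

lemma convolution_left (L : F →L[ℝ] E →L[ℝ] G) {f f' : ℝ → F} {g : ℝ → E}
    (hf : HasIntegrableDeriv f f') (hg : Integrable g) :
    HasIntegrableDeriv (f ⋆[L] g) (f' ⋆[L] g) := by
  simpa only [convolution_flip] using convolution_right L.flip hg hf

end Convolution

section Real

variable {f f' g g' : ℝ → ℝ}

lemma absolutelyContinuousOnInterval (hf : HasIntegrableDeriv f f') (a b : ℝ) :
    AbsolutelyContinuousOnInterval f a b := by
  rw [hf.eq_add_integral a]
  exact contDiffOn_const.absolutelyContinuousOnInterval.fun_add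
    (hf.integrable_deriv.intervalIntegrable.absolutelyContinuousOnInterval_intervalIntegral
      left_mem_uIcc)

lemma integrable_mul (hf : HasIntegrableDeriv f f') (hg : Integrable g) :
    Integrable fun x => f x * g x := by
  obtain ⟨M, hM⟩ := hf.exists_norm_le
  exact hg.bdd_mul hf.continuous.aestronglyMeasurable (ae_of_all _ hM)

lemma mul (hf : HasIntegrableDeriv f f') (hg : HasIntegrableDeriv g g') :
    HasIntegrableDeriv (fun x => f x * g x) (fun x => g x * f' x + f x * g' x) := by
  refine ⟨(hg.integrable_mul hf.integrable_deriv).add (hf.integrable_mul hg.integrable_deriv),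
    fun a b => ?_⟩
  rw [← (hf.absolutelyContinuousOnInterval a b).integral_deriv_mul_eq_sub
    (hg.absolutelyContinuousOnInterval a b)]
  refine intervalIntegral.integral_congr_ae ?_
  filter_upwards [hf.ae_hasDerivAt, hg.ae_hasDerivAt] with x hfx hgx _
  rw [hfx.deriv, hgx.deriv, mul_comm (f' x)]

lemma integral_mul_deriv_eq_neg_integral_deriv_mul (hf : HasIntegrableDeriv f f')
    (hg : HasIntegrableDeriv g g') (hint : Integrable f) :
    ∫ x, f x * g' x = -∫ x, f' x * g x := by
  have hsum := (hf.mul hg).integral_deriv_eq_zero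
    ((hg.integrable_mul hint).congr (ae_of_all _ fun x => mul_comm _ _))
  rw [integral_add (hg.integrable_mul hf.integrable_deriv)
    (hf.integrable_mul hg.integrable_deriv)] at hsum
  simp_rw [mul_comm (f' _)]
  linarith

lemma log (hf : HasIntegrableDeriv f f') (hf' : Continuous f') {c : ℝ} (hc : 0 < c)
    (hle : ∀ x, c ≤ f x) :
    HasIntegrableDeriv (fun x => Real.log (f x)) (fun x => f' x / f x) := by
  have hpos x : 0 < f x := hc.trans_le (hle x)
  refine of_hasDerivAt
    (fun x => (hf.hasDerivAt_of_continuousAt hf'.continuousAt).log (hpos x).ne') ?_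
  simp_rw [div_eq_mul_inv]
  refine hf.integrable_deriv.mul_bdd (c := c⁻¹)
    (hf.continuous.inv₀ fun x => (hpos x).ne').aestronglyMeasurable (ae_of_all _ fun x => ?_)
  rw [norm_inv, Real.norm_of_nonneg (hpos x).le]
  exact inv_anti₀ hc (hle x)

end Real

end HasIntegrableDeriv

section Limits

variable {α : Type*} [MeasurableSpace α] {μ : Measure α}

lemma integrable_of_tendsto_of_integral_le {f : ℕ → α → ℝ} {F : α → ℝ} {C : ℝ}
    (hint : ∀ n, Integrable (f n) μ) (hnn : ∀ n, 0 ≤ᵐ[μ] f n) (hle : ∀ n, ∫ x, f n x ∂μ ≤ C)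
    (hlim : ∀ᵐ x ∂μ, Tendsto (fun n => f n x) atTop (𝓝 (F x))) : Integrable F μ := by
  refine ⟨aestronglyMeasurable_of_tendsto_ae _ (fun n => (hint n).aestronglyMeasurable) hlim, ?_⟩
  have hbound n : ∫⁻ x, ‖f n x‖ₑ ∂μ ≤ ENNReal.ofReal C := by
    rw [← ofReal_integral_norm_eq_lintegral_enorm (hint n)]
    refine ENNReal.ofReal_le_ofReal ((integral_congr_ae ?_).trans_le (hle n))
    filter_upwards [hnn n] with x hx using Real.norm_of_nonneg hx
  calc ∫⁻ x, ‖F x‖ₑ ∂μ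
      = ∫⁻ x, liminf (fun n => ‖f n x‖ₑ) atTop ∂μ :=
        lintegral_congr_ae (hlim.mono fun x hx => hx.enorm.liminf_eq.symm)
    _ ≤ liminf (fun n => ∫⁻ x, ‖f n x‖ₑ ∂μ) atTop :=
        lintegral_liminf_le' fun n => (hint n).aestronglyMeasurable.enorm
    _ ≤ ENNReal.ofReal C := liminf_le_of_frequently_le' (Frequently.of_forall hbound)
    _ < ⊤ := ENNReal.ofReal_lt_top

lemma integrable_div_and_integral_div_eq_of_tendsto {a u : α → ℝ} {ε : ℕ → ℝ} {I : ℝ}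
    (ha : ∀ x, 0 ≤ a x) (hu : ∀ x, 0 ≤ u x) (hε : ∀ n, 0 < ε n) (hanti : Antitone ε)
    (hε_lim : Tendsto ε atTop (𝓝 0)) (hzero : ∀ᵐ x ∂μ, u x = 0 → a x = 0)
    (hint : ∀ n, Integrable (fun x => a x / (u x + ε n)) μ)
    (hI : Tendsto (fun n => ∫ x, a x / (u x + ε n) ∂μ) atTop (𝓝 I)) :
    Integrable (fun x => a x / u x) μ ∧ ∫ x, a x / u x ∂μ = I := by
  have hden n x : 0 < u x + ε n := add_pos_of_nonneg_of_pos (hu x) (hε n)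
  have hmono x : Monotone fun n => a x / (u x + ε n) := fun m n hmn =>
    div_le_div_of_nonneg_left (ha x) (hden n x) (add_le_add_right (hanti hmn) _)
  -- At a zero of `u` every term vanishes, and so does the limit, since `0 / 0 = 0`.
  have hlim : ∀ᵐ x ∂μ, Tendsto (fun n => a x / (u x + ε n)) atTop (𝓝 (a x / u x)) := by
    filter_upwards [hzero] with x hx
    rcases (hu x).eq_or_lt' with hux | hux
    · simp [hx hux]
    · simpa only [add_zero] using! tendsto_const_nhds.div (hε_lim.const_add (u x))
        (by simpa only [add_zero] using hux.ne')
  have hle : ∀ n, ∫ x, a x / (u x + ε n) ∂μ ≤ I := Monotone.ge_of_tendsto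
    (fun m n hmn => integral_mono (hint m) (hint n) fun x => hmono x hmn) hI
  have hint_lim : Integrable (fun x => a x / u x) μ := integrable_of_tendsto_of_integral_le hint
    (fun n => ae_of_all _ fun x => div_nonneg (ha x) (hden n x).le) hle hlim
  exact ⟨hint_lim, tendsto_nhds_unique (integral_tendsto_of_tendsto_of_monotone hint hint_lim
    (ae_of_all _ hmono) hlim) hI⟩

lemma abs_log_le_abs_log_add_abs_log {a b c : ℝ} (ha : 0 < a) (hab : a ≤ b) (hbc : b ≤ c) :
    |log b| ≤ |log a| + |log c| :=
  (abs_le_max_abs_abs (log_le_log ha hab) (log_le_log (ha.trans_le hab) hbc)).trans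
    (max_le_add_of_nonneg (abs_nonneg _) (abs_nonneg _))

lemma tendsto_integral_mul_log_add {u g : α → ℝ} {M : ℝ} (hu : AEStronglyMeasurable u μ)
    (hnn : ∀ x, 0 ≤ u x) (hM : ∀ x, u x ≤ M) (hg : Integrable g μ)
    (hzero : ∀ᵐ x ∂μ, u x = 0 → g x = 0) (hlog : Integrable (fun x => g x * log (u x)) μ) :
    Tendsto (fun ε => ∫ x, g x * log (u x + ε) ∂μ) (𝓝[>] 0) (𝓝 (∫ x, g x * log (u x) ∂μ)) := by
  refine tendsto_integral_filter_of_dominated_convergence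
    (fun x => ‖g x * log (u x)‖ + ‖g x‖ * |log (M + 1)|) (Eventually.of_forall fun ε => ?_) ?_
    (hlog.norm.add (hg.norm.mul_const _)) ?_
  · exact hg.aestronglyMeasurable.mul
      (hu.aemeasurable.add_const ε).log.aestronglyMeasurable
  · filter_upwards [Ioc_mem_nhdsGT one_pos] with ε hε
    filter_upwards [hzero] with x hx
    rcases (hnn x).eq_or_lt' with hux | hux
    · simp [hx hux]
    · rw [norm_mul, norm_mul, ← mul_add]
      exact mul_le_mul_of_nonneg_left (abs_log_le_abs_log_add_abs_log hux
        (le_add_of_nonneg_right hε.1.le) (add_le_add (hM x) hε.2)) (norm_nonneg _)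
  · filter_upwards [hzero] with x hx
    rcases (hnn x).eq_or_lt' with hux | hux
    · simp [hx hux]
    · have hcont : ContinuousAt (fun ε => g x * log (u x + ε)) 0 := by
        fun_prop (disch := simpa using hux.ne')
      simpa using hcont.tendsto.mono_left nhdsWithin_le_nhds

end Limits

namespace HasIntegrableDeriv

variable {p p' p'' : ℝ → ℝ}

lemma integrable_sq_div_add_and_integral_eq (hp : HasIntegrableDeriv p p')
    (hp' : HasIntegrableDeriv p' p'') (hnn : ∀ x, 0 ≤ p x) {ε : ℝ} (hε : 0 < ε) :
    Integrable (fun x => p' x ^ 2 / (p x + ε)) ∧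
      ∫ x, p' x ^ 2 / (p x + ε) = -∫ x, p'' x * Real.log (p x + ε) := by
  have hlog : HasIntegrableDeriv (fun x => Real.log (p x + ε)) (fun x => p' x / (p x + ε)) :=
    (hp.add_const ε).log hp'.continuous hε fun x => le_add_of_nonneg_left (hnn x)
  simp_rw [sq, mul_div_assoc]
  exact ⟨hp'.integrable_mul hlog.integrable_deriv,
    hp'.integral_mul_deriv_eq_neg_integral_deriv_mul hlog hp.integrable_deriv⟩

theorem integrable_sq_div_and_integral_eq (hp : HasIntegrableDeriv p p')
    (hp' : HasIntegrableDeriv p' p'') (hnn : ∀ x, 0 ≤ p x)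
    (hlog : Integrable fun x => p'' x * Real.log (p x)) :
    Integrable (fun x => p' x ^ 2 / p x) ∧
      ∫ x, p' x ^ 2 / p x = -∫ x, p'' x * Real.log (p x) := by
  let ε : ℕ → ℝ := fun n => 1 / ((n : ℝ) + 1)
  have hε n : 0 < ε n := Nat.one_div_pos_of_nat
  have hε_lim : Tendsto ε atTop (𝓝 0) := tendsto_one_div_add_atTop_nhds_zero_nat
  have hreg n := hp.integrable_sq_div_add_and_integral_eq hp' hnn (hε n)
  have hp'_zero : ∀ᵐ x, p x = 0 → p' x = 0 := hp.ae_eq_zero_of_eq 0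
  have hp''_zero : ∀ᵐ x, p x = 0 → p'' x = 0 := by
    filter_upwards [hp'_zero, hp'.ae_eq_zero_of_eq 0] with x h h' using h' ∘ h
  have hlim : Tendsto (fun n => ∫ x, p' x ^ 2 / (p x + ε n)) atTop
      (𝓝 (-∫ x, p'' x * Real.log (p x))) := by
    obtain ⟨M, hM⟩ := hp.exists_norm_le
    simp_rw [fun n => (hreg n).2]
    exact ((tendsto_integral_mul_log_add hp.continuous.aestronglyMeasurable hnn
      (fun x => (le_abs_self _).trans (hM x)) hp'.integrable_deriv hp''_zero hlog).comp
      (tendsto_nhdsWithin_iff.2 ⟨hε_lim, Eventually.of_forall hε⟩)).neg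
  exact integrable_div_and_integral_div_eq_of_tendsto (fun x => sq_nonneg _) hnn hε
    (fun _ _ => Nat.one_div_le_one_div) hε_lim
    (hp'_zero.mono fun x h hx => by rw [h hx, zero_pow two_ne_zero]) (fun n => (hreg n).1) hlim

end HasIntegrableDeriv

lemma locallyIntegrable_of_sub_eq_integral {E : Type*} [NormedAddCommGroup E] [NormedSpace ℝ E]
    {f f' : ℝ → E} (hint : Integrable f) (hFTC : ∀ a b : ℝ, f b - f a = ∫ x in a..b, f' x)
    (hzero : ∀ x, f x = 0 → f' x = 0) : LocallyIntegrable f' := by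
  by_contra hnot
  simp only [LocallyIntegrable, not_forall] at hnot
  obtain ⟨x₀, hx₀⟩ := hnot
  -- Across `x₀` the interval integral of `f'` takes its junk value `0`.
  have hacross {x y : ℝ} (hx : x < x₀) (hy : x₀ < y) : f y = f x := by
    rw [← sub_eq_zero, hFTC]
    refine intervalIntegral.integral_undef fun h => hx₀ ⟨_, Ioc_mem_nhds hx hy, ?_⟩
    exact (intervalIntegrable_iff_integrableOn_Ioc_of_le (hx.trans hy).le).1 h
  have hconst : ∀ᵐ x, f x = f (x₀ + 1) := by
    filter_upwards [Measure.ae_ne volume x₀] with x hx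
    rcases hx.lt_or_gt with h | h
    · exact (hacross h (lt_add_one x₀)).symm
    · rw [hacross (sub_one_lt x₀) h, hacross (sub_one_lt x₀) (lt_add_one x₀)]
  have hconst_zero : f (x₀ + 1) = 0 :=
    (integrable_const_iff.1 (hint.congr hconst)).resolve_right fun h => by
      simpa using h.measure_univ_lt_top
  have hf'_zero : f' =ᵐ[volume] 0 := by
    filter_upwards [hconst] with x hx using hzero x (hx.trans hconst_zero)
  exact hx₀ (((integrable_zero ℝ E volume).congr hf'_zero.symm).integrableAtFilter _)

lemma abs_le_sq_div_add {a b : ℝ} (hb : 0 < b) : |a| ≤ a ^ 2 / b + b := by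
  have hsq : |a| * b ≤ a ^ 2 + b * b := by nlinarith [sq_nonneg (|a| - b), sq_abs a, abs_nonneg a]
  rw [div_add' _ _ _ hb.ne']
  exact (le_div_iff₀ hb).2 hsq

lemma hasIntegrableDeriv_of_integrableOn_sq_div {f f' : ℝ → ℝ} (hnn : ∀ x, 0 ≤ f x)
    (hint : Integrable f) (hFTC : ∀ a b : ℝ, f b - f a = ∫ x in a..b, f' x)
    (hzero : ∀ x, f x = 0 → f' x = 0)
    (hfisher : IntegrableOn (fun x => f' x ^ 2 / f x) {x | 0 < f x}) :
    HasIntegrableDeriv f f' := by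
  have hmeas := (locallyIntegrable_of_sub_eq_integral hint hFTC hzero).aestronglyMeasurable
  have hpos : NullMeasurableSet {x | 0 < f x} :=
    nullMeasurableSet_lt aemeasurable_const hint.aemeasurable
  have hon : IntegrableOn f' {x | 0 < f x} :=
    (hfisher.add hint.integrableOn).mono' hmeas.restrict <|
      (ae_restrict_mem₀ hpos).mono fun x hx => abs_le_sq_div_add hx
  refine ⟨(integrableOn_iff_integrable_of_support_subset fun x hx => ?_).1 hon, hFTC⟩
  exact (hnn x).lt_of_ne' fun h => hx (hzero x h)

theorem fisher_eq_neg_integral_second_deriv_log_general {p₁ p₂ p₁' p₂' p p' p'' : ℝ → ℝ}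
    (hnn₁ : ∀ x, 0 ≤ p₁ x) (hnn₂ : ∀ x, 0 ≤ p₂ x) (hint₂ : Integrable p₂)
    (hp₁ : HasIntegrableDeriv p₁ p₁') (hp₂ : HasIntegrableDeriv p₂ p₂')
    (hp : ∀ x, p x = ∫ y, p₁ (x - y) * p₂ y)
    (hp' : ∀ x, p' x = ∫ y, p₁' (x - y) * p₂ y)
    (hp'' : ∀ x, p'' x = ∫ y, p₁' (x - y) * p₂' y)
    (hlog : Integrable fun x => |p'' x * log (p x)|) :
    IntegrableOn (fun x => p' x ^ 2 / p x) {x | 0 < p x} ∧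
      ∫ x in {x | 0 < p x}, p' x ^ 2 / p x = -∫ x, p'' x * log (p x) := by
  simp_rw [← convolution_mul_swap] at hp hp' hp''
  obtain rfl := funext hp
  obtain rfl := funext hp'
  obtain rfl := funext hp''
  have hnn x : 0 ≤ (p₁ ⋆[mul ℝ ℝ] p₂) x :=
    integral_nonneg fun t => mul_nonneg (hnn₁ t) (hnn₂ (x - t))
  have hderiv := hp₁.convolution_left (mul ℝ ℝ) hint₂
  have hderiv' := hp₂.convolution_right (mul ℝ ℝ) hp₁.integrable_deriv
  have hmeas := hderiv'.integrable_deriv.aestronglyMeasurable.mul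
    hderiv.continuous.measurable.log.aestronglyMeasurable
  obtain ⟨hint, heq⟩ := hderiv.integrable_sq_div_and_integral_eq hderiv' hnn
    ((integrable_norm_iff hmeas).1 hlog)
  refine ⟨hint.integrableOn, heq ▸ setIntegral_eq_integral_of_forall_compl_eq_zero fun x hx => ?_⟩
  rw [(hnn x).antisymm' (not_lt.1 hx), div_zero]

/-- Let `X = X₁ + X₂` with independent `X₁, X₂` having densities `p₁, p₂` of finite Fisher
information, and let `p = p₁ ⋆ p₂`, `p' = p₁' ⋆ p₂`, `p'' = p₁' ⋆ p₂'` be the density of `X`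
and its derivatives. If `∫ |p''(x) log p(x)| dx < ∞` (with the convention `0 log 0 = 0`,
consistent with `Real.log 0 = 0` and with `p'' = 0` on `{p = 0}`), then
`I(X) = -∫ p''(x) log p(x) dx`. -/
theorem fisher_eq_neg_integral_second_deriv_log
    (p₁ p₂ p₁' p₂' : ℝ → ℝ)
    (hnn₁ : ∀ x, 0 ≤ p₁ x) (hint₁ : Integrable p₁) (h1₁ : ∫ x, p₁ x = 1)
    (hnn₂ : ∀ x, 0 ≤ p₂ x) (hint₂ : Integrable p₂) (h1₂ : ∫ x, p₂ x = 1)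
    (hFTC₁ : ∀ a b : ℝ, p₁ b - p₁ a = ∫ x in a..b, p₁' x)
    (hFTC₂ : ∀ a b : ℝ, p₂ b - p₂ a = ∫ x in a..b, p₂' x)
    (hconv₁ : ∀ x, p₁ x = 0 → p₁' x = 0)
    (hconv₂ : ∀ x, p₂ x = 0 → p₂' x = 0)
    (hI₁fin : IntegrableOn (fun x => (p₁' x) ^ 2 / p₁ x) {x | 0 < p₁ x})
    (hI₂fin : IntegrableOn (fun x => (p₂' x) ^ 2 / p₂ x) {x | 0 < p₂ x})
    (p p' p'' : ℝ → ℝ)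
    (hp : ∀ x, p x = ∫ y, p₁ (x - y) * p₂ y)
    (hp' : ∀ x, p' x = ∫ y, p₁' (x - y) * p₂ y)
    (hp'' : ∀ x, p'' x = ∫ y, p₁' (x - y) * p₂' y)
    (hlog : Integrable (fun x => |p'' x * Real.log (p x)|)) :
    ∫ x in {x | 0 < p x}, (p' x) ^ 2 / p x = -∫ x, p'' x * Real.log (p x) := by
  exact (fisher_eq_neg_integral_second_deriv_log_general hnn₁ hnn₂ hint₂
    (hasIntegrableDeriv_of_integrableOn_sq_div hnn₁ hint₁ hFTC₁ hconv₁ hI₁fin)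
    (hasIntegrableDeriv_of_integrableOn_sq_div hnn₂ hint₂ hFTC₂ hconv₂ hI₂fin)
    hp hp' hp'' hlog).2
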